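/- Let E := ℓ²(ℕ; ℝ). There exist a subset G ⊆ E × E, a map F : E → E, and points s0, s̄ ∈ E such that: (a) G is monotone, i.e., ⟪x − y, u − v⟫ ≥ 0 for all (x,u), (y,v) ∈ G; (b) G is maximally monotone, i.e., every monotone subset of E × E containing G equals G; (c) the domain {x ∈ E : ∃ u, (x,u) ∈ G} is a bounded set; (d) F is the resolvent of G, i.e., for all x, y ∈ E, y = F x if and only if (y, x − y) ∈ G; (e) (s̄, 0) ∈ G (so s̄ is a zero of G); and (f) the iterates F^[k](s0) converge weakly to s̄ (⟪F^[k](s0), v⟫ → ⟪s̄, v⟫ for every v ∈ E) but do not converge to s̄ in norm. -/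

import Mathlib

open scoped RealInnerProductSpace

/-!
A sequence `x` is an orbit of the resolvent of a monotone graph as soon as the points
`(x (k + 1), x k - x (k + 1))` form a monotone graph. If `x` stays in a ball, this graph extends to
a maximal one over the same ball: Zorn's lemma makes it maximal among the monotone graphs over the
ball, and the Debrunner–Flor theorem (a minimax argument plus weak compactness) then shows that
every `z` is of the form `y + u` for a point `(y, u)` of the graph. As in Minty's theorem, the
graph is therefore maximal and has a resolvent.

So only a Gram matrix has to be found. Scaled kernels of the Bergman space of the unit disc, at the
points `k / (k + 1)`, have Gram matrix `(j + 1) (k + 1) / (j + k + 1) ^ 2`. Its rows tend to zero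
and its diagonal tends to `1 / 4`, so the sequence converges weakly but not strongly to `0`.
Monotonicity comes down to the convexity of `σ ↦ σ⁻¹ ((σ + 1)⁻¹ + (σ + 1)⁻²)`, because the
symmetrized increments of the Gram matrix are a function of `j + k` up to a term that has a sign.
-/

open Set Filter Topology Metric

section MonotoneGraph

variable {E : Type*} [NormedAddCommGroup E] [InnerProductSpace ℝ E]

/-- Monotonicity of a set-valued operator on `E`, which is encoded by its graph `G`. -/
def IsMonotoneGraph (G : Set (E × E)) : Prop :=
  ∀ p ∈ G, ∀ q ∈ G, (0 : ℝ) ≤ ⟪p.1 - q.1, p.2 - q.2⟫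

/-- `F` is the resolvent `(1 + G)⁻¹` of the set-valued operator with graph `G`; in particular
this operator is single-valued and defined everywhere. -/
def IsResolvent (F : E → E) (G : Set (E × E)) : Prop :=
  ∀ x y, y = F x ↔ (y, x - y) ∈ G

variable {F : E → E} {G : Set (E × E)}

lemma inner_sub_sub_comm (x y u v : E) : ⟪x - y, u - v⟫ = ⟪y - x, v - u⟫ := by
  rw [← neg_sub y, ← neg_sub v, inner_neg_neg]

namespace IsMonotoneGraph

protected lemma insert (hG : IsMonotoneGraph G) {p : E × E}
    (hp : ∀ q ∈ G, 0 ≤ ⟪p.1 - q.1, p.2 - q.2⟫) : IsMonotoneGraph (insert p G) := by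
  rintro _ (rfl | hq) _ (rfl | hr)
  · simp
  · exact hp _ hr
  · rw [inner_sub_sub_comm]
    exact hp _ hq
  · exact hG _ hq _ hr

protected lemma sUnion {c : Set (Set (E × E))} (hc : IsChain (· ⊆ ·) c)
    (hmono : ∀ G ∈ c, IsMonotoneGraph G) : IsMonotoneGraph (⋃₀ c) := by
  rintro p ⟨G, hG, hp⟩ q ⟨H, hH, hq⟩
  rcases hc.total hG hH with hGH | hHG
  · exact hmono H hH p (hGH hp) q hq
  · exact hmono G hG p hp q (hHG hq)

lemma eq_of_mem (hG : IsMonotoneGraph G) {x y z : E} (hy : (y, x - y) ∈ G)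
    (hz : (z, x - z) ∈ G) : y = z := by
  have hle : 0 ≤ ⟪y - z, (x - y) - (x - z)⟫ := hG _ hy _ hz
  rw [sub_sub_sub_cancel_left, ← neg_sub y z, inner_neg_right, neg_nonneg] at hle
  exact sub_eq_zero.mp (real_inner_self_nonpos.mp hle)

lemma exists_isResolvent (hG : IsMonotoneGraph G) (hsurj : ∀ x, ∃ y, (y, x - y) ∈ G) :
    ∃ F, IsResolvent F G := by
  choose F hF using hsurj
  refine ⟨F, fun x y => ⟨?_, fun hy => hG.eq_of_mem hy (hF x)⟩⟩
  rintro rfl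
  exact hF x

lemma maximal_of_isResolvent (hG : IsMonotoneGraph G) (hF : IsResolvent F G) :
    Maximal IsMonotoneGraph G := by
  refine ⟨hG, fun H hH hGH => ?_⟩
  rintro ⟨y, u⟩ hyu
  have hFG : (F (y + u), y + u - F (y + u)) ∈ G := (hF _ _).mp rfl
  have hy : y = F (y + u) := hH.eq_of_mem (x := y + u) (by simpa using hyu) (hGH hFG)
  rw [← hy] at hFG
  simpa using hFG

lemma exists_maximal_superset (hG : IsMonotoneGraph G) {s : Set E} (hs : Prod.fst '' G ⊆ s) :
    ∃ H, G ⊆ H ∧ Maximal (fun H => IsMonotoneGraph H ∧ Prod.fst '' H ⊆ s) H := by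
  refine zorn_subset_nonempty {H | IsMonotoneGraph H ∧ Prod.fst '' H ⊆ s} ?_ G ⟨hG, hs⟩
  refine fun c hc hchain _ => ⟨⋃₀ c,
    ⟨IsMonotoneGraph.sUnion hchain fun H hH => (hc hH).1, ?_⟩, fun H hH => subset_sUnion_of_mem hH⟩
  rintro _ ⟨p, ⟨H, hH, hp⟩, rfl⟩
  exact (hc hH).2 ⟨p, hp, rfl⟩

end IsMonotoneGraph

end MonotoneGraph

section DebrunnerFlor

variable {E : Type*} [NormedAddCommGroup E] [InnerProductSpace ℝ E]

lemma inner_sub_sub_eq_dist_midpoint (a b y : E) :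
    ⟪y - a, y - b⟫ = dist y (midpoint ℝ a b) ^ 2 - (dist a b / 2) ^ 2 := by
  have ha : y - a = (y - midpoint ℝ a b) - (2⁻¹ : ℝ) • (a - b) := by
    rw [midpoint_eq_smul_add, invOf_eq_inv]
    module
  have hb : y - b = (y - midpoint ℝ a b) + (2⁻¹ : ℝ) • (a - b) := by
    rw [midpoint_eq_smul_add, invOf_eq_inv]
    module
  rw [ha, hb, inner_sub_left, inner_add_right, inner_add_right, real_inner_self_eq_norm_sq,
    real_inner_self_eq_norm_sq, real_inner_comm (y - midpoint ℝ a b), norm_smul, dist_eq_norm,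
    dist_eq_norm, Real.norm_of_nonneg (by norm_num)]
  ring

lemma inner_sub_sub_nonpos_iff (a b y : E) :
    ⟪y - a, y - b⟫ ≤ 0 ↔ y ∈ closedBall (midpoint ℝ a b) (dist a b / 2) := by
  rw [inner_sub_sub_eq_dist_midpoint, sub_nonpos, mem_closedBall,
    sq_le_sq₀ dist_nonneg (by positivity)]

lemma convexOn_inner_sub_sub (a b : E) : ConvexOn ℝ univ fun y => ⟪y - a, y - b⟫ := by
  simp_rw [inner_sub_sub_eq_dist_midpoint a b, sub_eq_add_neg]
  exact ((convexOn_univ_dist (midpoint ℝ a b)).pow (fun _ _ => dist_nonneg) 2).add_const _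

variable {ι : Type*} {a b : ι → E}

lemma sum_mul_inner_sub_sub_nonpos [Fintype ι] (hab : ∀ i j, ⟪a i - a j, b i - b j⟫ ≤ 0)
    {μ : ι → ℝ} (hμ : μ ∈ stdSimplex ℝ ι) {w : E} (hw : ∑ i, μ i • a i = w) :
    ∑ i, μ i * ⟪w - a i, w - b i⟫ ≤ 0 := by
  have hbary (c v : E) : ∑ j, μ j * ⟪c - a j, v⟫ = ⟪c - w, v⟫ := by
    simp_rw [inner_sub_left, mul_sub, Finset.sum_sub_distrib, ← Finset.sum_mul, hμ.2, one_mul,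
      ← real_inner_smul_left, ← sum_inner, hw]
  have hsplit : ∑ i, μ i * ⟪w - a i, w - b i⟫ = ∑ i, μ i * ⟪a i - w, b i⟫ := by
    have hterm (i : ι) : ⟪w - a i, w - b i⟫ = ⟪w - a i, w⟫ + ⟪a i - w, b i⟫ := by
      rw [inner_sub_right, ← neg_sub (a i) w, inner_neg_left (a i - w) (b i), sub_neg_eq_add]
    simp_rw [hterm, mul_add, Finset.sum_add_distrib, hbary, sub_self, inner_zero_left, zero_add]
  have hpairs : ∑ i, ∑ j, μ i * μ j * ⟪a i - a j, b i - b j⟫ =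
      2 * ∑ i, μ i * ⟪a i - w, b i⟫ := by
    have hfst : ∑ i, ∑ j, μ i * μ j * ⟪a i - a j, b i⟫ = ∑ i, μ i * ⟪a i - w, b i⟫ := by
      simp_rw [mul_assoc, ← Finset.mul_sum, hbary]
    have hterm (i j : ι) : μ i * μ j * ⟪a i - a j, b i - b j⟫ =
        μ i * μ j * ⟪a i - a j, b i⟫ + μ j * μ i * ⟪a j - a i, b j⟫ := by
      rw [inner_sub_right, ← neg_sub (a j) (a i), inner_neg_left (a j - a i) (b j)]
      ring
    simp_rw [hterm, Finset.sum_add_distrib]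
    rw [Finset.sum_comm (f := fun i j => μ j * μ i * ⟪a j - a i, b j⟫), hfst, two_mul]
  have hnonpos : ∑ i, ∑ j, μ i * μ j * ⟪a i - a j, b i - b j⟫ ≤ 0 :=
    Finset.sum_nonpos fun i _ => Finset.sum_nonpos fun j _ =>
      mul_nonpos_of_nonneg_of_nonpos (mul_nonneg (hμ.1 i) (hμ.1 j)) (hab i j)
  linarith

lemma exists_forall_inner_sub_sub_nonpos [Finite ι] [Nonempty ι]
    (hab : ∀ i j, ⟪a i - a j, b i - b j⟫ ≤ 0) :
    ∃ y ∈ convexHull ℝ (range a), ∀ i, ⟪y - a i, y - b i⟫ ≤ 0 := by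
  classical
  cases nonempty_fintype ι
  -- A saddle point of `f` on hull × simplex bounds each vertex value by a value at a barycenter.
  let f (y : E) : (ι → ℝ) →ₗ[ℝ] ℝ := Fintype.linearCombination ℝ fun i => ⟪y - a i, y - b i⟫
  have hf (y μ) : f y μ = ∑ i, μ i * ⟪y - a i, y - b i⟫ := rfl
  have hf_cont (μ) : Continuous fun y => f y μ := by
    simp only [hf]
    fun_prop
  have hf_convex (μ) (hμ : μ ∈ stdSimplex ℝ ι) : ConvexOn ℝ univ fun y => f y μ := by
    refine ⟨convex_univ, fun y _ z _ s t hs ht hst => ?_⟩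
    simp only [hf, smul_eq_mul, Finset.mul_sum, ← Finset.sum_add_distrib]
    refine Finset.sum_le_sum fun i _ => ?_
    have hconvex := (convexOn_inner_sub_sub (a i) (b i)).smul (hμ.1 i)
    simpa using hconvex.2 (mem_univ y) (mem_univ z) hs ht hst
  obtain ⟨y, hy, μ, hμ, hsaddle⟩ := Sion.exists_isSaddlePointOn (f := fun y μ => f y μ)
    (X := convexHull ℝ (range a)) (Y := stdSimplex ℝ ι)
    (range_nonempty a).convexHull (convex_convexHull ℝ _)
    ((finite_range a).isCompact_convexHull ℝ)
    (fun μ _ => (hf_cont μ).lowerSemicontinuous.lowerSemicontinuousOn _)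
    (fun μ hμ => ((hf_convex μ hμ).subset (subset_univ _) (convex_convexHull ℝ _)).quasiconvexOn)
    (convex_stdSimplex ℝ ι) ⟨_, single_mem_stdSimplex ℝ (Classical.arbitrary ι)⟩
    (isCompact_stdSimplex ℝ ι)
    (fun y _ => (f y).continuous_of_finiteDimensional.upperSemicontinuous.upperSemicontinuousOn _)
    (fun y _ => ((f y).concaveOn (convex_stdSimplex ℝ ι)).quasiconcaveOn)
  refine ⟨y, hy, fun i => ?_⟩
  have hw : ∑ j, μ j • a j ∈ convexHull ℝ (range a) :=
    (convex_convexHull ℝ _).sum_mem (fun j _ => hμ.1 j) hμ.2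
      fun j _ => subset_convexHull ℝ _ (mem_range_self j)
  calc ⟪y - a i, y - b i⟫ = f y (Pi.single i 1) := by simp [f]
    _ ≤ f (∑ j, μ j • a j) μ := hsaddle _ hw _ (single_mem_stdSimplex ℝ i)
    _ ≤ 0 := sum_mul_inner_sub_sub_nonpos hab hμ rfl

lemma closedBall_inter_iInter_nonempty [CompleteSpace E] {κ : Type*} {c₀ : E} {r₀ : ℝ}
    {c : κ → E} {r : κ → ℝ}
    (h : ∀ u : Finset κ, (closedBall c₀ r₀ ∩ ⋂ i ∈ u, closedBall (c i) (r i)).Nonempty) :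
    (closedBall c₀ r₀ ∩ ⋂ i, closedBall (c i) (r i)).Nonempty := by
  -- The weak-star topology of the dual makes closed balls compact.
  let T : E → WeakDual ℝ E := fun y => StrongDual.toWeakDual (InnerProductSpace.toDual ℝ E y)
  let B (c : E) (r : ℝ) : Set (WeakDual ℝ E) :=
    WeakDual.toStrongDual ⁻¹' closedBall (InnerProductSpace.toDual ℝ E c) r
  have hT : Function.Surjective T :=
    StrongDual.toWeakDual.surjective.comp (InnerProductSpace.toDual ℝ E).surjective
  have hB (c : E) (r : ℝ) : T ⁻¹' B c r = closedBall c r :=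
    (InnerProductSpace.toDual ℝ E).isometry.preimage_closedBall c r
  obtain ⟨φ, hφ⟩ : (B c₀ r₀ ∩ ⋂ i, B (c i) (r i)).Nonempty := by
    have hcompact : IsCompact (B c₀ r₀) := WeakDual.isCompact_closedBall _ _
    refine hcompact.inter_iInter_nonempty _ (fun i => WeakDual.isClosed_closedBall _ _) fun u => ?_
    refine nonempty_of_nonempty_preimage (f := T) ?_
    simpa only [preimage_inter, preimage_iInter₂, hB] using h u
  obtain ⟨y, rfl⟩ := hT φ
  refine ⟨y, ?_⟩
  simp_rw [← hB, ← preimage_iInter]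
  exact hφ

end DebrunnerFlor

namespace IsMonotoneGraph

variable {E : Type*} [NormedAddCommGroup E] [InnerProductSpace ℝ E] [CompleteSpace E]
  {G : Set (E × E)} {c : E} {r : ℝ}

lemma exists_insert (hG : IsMonotoneGraph G) (hr : 0 ≤ r)
    (hdom : Prod.fst '' G ⊆ closedBall c r) (x : E) :
    ∃ y ∈ closedBall c r, IsMonotoneGraph (insert (y, x - y) G) := by
  obtain ⟨y, hyc, hy⟩ := closedBall_inter_iInter_nonempty (κ := G) (c₀ := c) (r₀ := r)
    (c := fun p => midpoint ℝ p.1.1 (x - p.1.2)) (r := fun p => dist p.1.1 (x - p.1.2) / 2) <| by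
    intro u
    rcases u.eq_empty_or_nonempty with rfl | hu
    · simpa using hr
    have := hu.to_subtype
    obtain ⟨y, hyhull, hy⟩ := exists_forall_inner_sub_sub_nonpos (ι := u)
      (a := fun p => p.1.1.1) (b := fun p => x - p.1.1.2) fun p q => by
        rw [sub_sub_sub_cancel_left, ← neg_sub p.1.1.2, inner_neg_right, neg_nonpos]
        exact hG _ p.1.2 _ q.1.2
    refine ⟨y, convexHull_min ?_ (convex_closedBall c r) hyhull, mem_iInter₂.mpr fun p hp =>
      (inner_sub_sub_nonpos_iff _ _ _).mp (hy ⟨p, hp⟩)⟩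
    rintro _ ⟨p, rfl⟩
    exact hdom ⟨_, p.1.2, rfl⟩
  refine ⟨y, hyc, hG.insert fun p hp => ?_⟩
  have hle : ⟪y - p.1, y - (x - p.2)⟫ ≤ 0 :=
    (inner_sub_sub_nonpos_iff _ _ _).mpr (mem_iInter.mp hy ⟨p, hp⟩)
  change 0 ≤ ⟪y - p.1, x - y - p.2⟫
  rwa [sub_right_comm, ← neg_sub y, inner_neg_right, neg_nonneg]

theorem exists_maximal_isResolvent (hG : IsMonotoneGraph G) (hr : 0 ≤ r)
    (hdom : Prod.fst '' G ⊆ closedBall c r) :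
    ∃ H F, G ⊆ H ∧ Prod.fst '' H ⊆ closedBall c r ∧ Maximal IsMonotoneGraph H ∧
      IsResolvent F H := by
  obtain ⟨H, hGH, hmax⟩ := hG.exists_maximal_superset hdom
  obtain ⟨hH, hHdom⟩ := hmax.prop
  have hsurj (x : E) : ∃ y, (y, x - y) ∈ H := by
    obtain ⟨y, hy, hins⟩ := hH.exists_insert hr hHdom x
    have hinsdom : Prod.fst '' insert (y, x - y) H ⊆ closedBall c r := by
      rw [image_insert_eq]
      exact insert_subset hy hHdom
    exact ⟨y, hmax.le_of_ge ⟨hins, hinsdom⟩ (subset_insert _ _) (mem_insert _ _)⟩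
  obtain ⟨F, hF⟩ := hH.exists_isResolvent hsurj
  exact ⟨H, F, hGH, hHdom, hH.maximal_of_isResolvent hF, hF⟩

end IsMonotoneGraph

section Orbit

variable {E : Type*} [NormedAddCommGroup E]

/-- The smallest graph having `0` as a zero and whose resolvent can map `x k` to `x (k + 1)` for
all `k`. -/
def orbitGraph (x : ℕ → E) : Set (E × E) :=
  insert 0 (range fun k => (x (k + 1), x k - x (k + 1)))

variable {F : E → E} {G : Set (E × E)} {x : ℕ → E}

lemma IsResolvent.iterate_eq (hF : IsResolvent F G)
    (hx : ∀ k, (x (k + 1), x k - x (k + 1)) ∈ G) (k : ℕ) : F^[k] (x 0) = x k := by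
  induction k with
  | zero => rfl
  | succ k ih => rw [Function.iterate_succ_apply', ih, ← (hF _ _).mpr (hx k)]

variable [InnerProductSpace ℝ E]

lemma isMonotoneGraph_insert_zero_range {ι : Type*} {y u : ι → E} (hpos : ∀ i, 0 ≤ ⟪y i, u i⟫)
    (hmono : ∀ i j, 0 ≤ ⟪y i - y j, u i - u j⟫) :
    IsMonotoneGraph (insert 0 (range fun i => (y i, u i))) := by
  have hrange : IsMonotoneGraph (range fun i => (y i, u i)) := by
    rintro _ ⟨i, rfl⟩ _ ⟨j, rfl⟩
    exact hmono i j
  refine hrange.insert ?_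
  rintro _ ⟨i, rfl⟩
  simpa using hpos i

theorem exists_isResolvent_iterate_eq [CompleteSpace E] {C : ℝ} (hC : ∀ k, ‖x k‖ ≤ C)
    (hmono : IsMonotoneGraph (orbitGraph x)) :
    ∃ G F, Prod.fst '' G ⊆ closedBall 0 C ∧ Maximal IsMonotoneGraph G ∧ IsResolvent F G ∧
      0 ∈ G ∧ ∀ k, F^[k] (x 0) = x k := by
  have hC₀ : 0 ≤ C := (norm_nonneg _).trans (hC 0)
  have hdom : Prod.fst '' orbitGraph x ⊆ closedBall 0 C := by
    rintro _ ⟨_, rfl | ⟨k, rfl⟩, rfl⟩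
    · simpa using hC₀
    · simpa using hC (k + 1)
  obtain ⟨G, F, hsub, hGdom, hmax, hF⟩ := hmono.exists_maximal_isResolvent hC₀ hdom
  exact ⟨G, F, hGdom, hmax, hF, hsub (mem_insert _ _),
    hF.iterate_eq fun k => hsub (mem_insert_of_mem _ (mem_range_self k))⟩

end Orbit

section WeakConvergence

variable {E ι : Type*} [NormedAddCommGroup E] [InnerProductSpace ℝ E] {l : Filter ι}
  {x : ι → E} {C : ℝ}

lemma isClosed_setOf_tendsto_inner (hC : ∀ i, ‖x i‖ ≤ C) :
    IsClosed {v | Tendsto (fun i => ⟪x i, v⟫) l (𝓝 0)} := by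
  have hLip (i : ι) : LipschitzWith C.toNNReal fun v => ⟪x i, v⟫ :=
    LipschitzWith.of_dist_le_mul fun v w => by
      rw [dist_eq_norm, dist_eq_norm, ← inner_sub_right]
      exact (norm_inner_le_norm _ _).trans (by gcongr; exact (hC i).trans (Real.le_coe_toNNReal C))
  exact (LipschitzWith.uniformEquicontinuous _ _ hLip).equicontinuous.isClosed_setOfPred_tendsto
    continuous_const

lemma tendsto_inner_zero [CompleteSpace E] (hC : ∀ i, ‖x i‖ ≤ C)
    (hx : ∀ j, Tendsto (fun i => ⟪x i, x j⟫) l (𝓝 0)) (v : E) :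
    Tendsto (fun i => ⟪x i, v⟫) l (𝓝 0) := by
  let V : Submodule ℝ E := (Submodule.span ℝ (range x)).topologicalClosure
  have hxV (i : ι) : x i ∈ V :=
    Submodule.le_topologicalClosure _ (Submodule.subset_span (mem_range_self i))
  have hspan : ∀ w ∈ Submodule.span ℝ (range x), Tendsto (fun i => ⟪x i, w⟫) l (𝓝 0) := by
    intro w hw
    induction hw using Submodule.span_induction with
    | mem w hw =>
      obtain ⟨j, rfl⟩ := hw
      exact hx j
    | zero => simpa using tendsto_const_nhds
    | add w z _ _ hw hz => simpa [inner_add_right] using hw.add hz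
    | smul c w _ hw => simpa [real_inner_smul_right] using hw.const_mul c
  have hV : ∀ w ∈ V, Tendsto (fun i => ⟪x i, w⟫) l (𝓝 0) :=
    closure_minimal hspan (isClosed_setOf_tendsto_inner hC)
  obtain ⟨w, hw, z, hz, rfl⟩ := V.exists_add_mem_mem_orthogonal v
  simpa [inner_add_right, V.inner_right_of_mem_orthogonal (hxV _) hz] using hV w hw

end WeakConvergence

section BergmanGram

/-- The kernel `(s + 1) (t + 1) / (s + t + 1) ^ 2`, which is the Bergman kernel `(1 - v * w)⁻²` of
the unit disc at `v = s / (s + 1)` and `w = t / (t + 1)`, divided by `(s + 1) (t + 1)`. -/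
noncomputable def bergmanGram (s t : ℝ) : ℝ := (s + 1) * (t + 1) / (s + t + 1) ^ 2

/-- The part of the symmetrized increments of `bergmanGram` that depends on `σ = s + t + 2` only;
see `bergmanGram_step_add_step`. -/
noncomputable def gramDrop (σ : ℝ) : ℝ := σ⁻¹ * ((σ + 1)⁻¹ + (σ + 1)⁻¹ ^ 2)

lemma convexOn_gramDrop : ConvexOn ℝ (Ioi 0) gramDrop := by
  have hinv : ConvexOn ℝ (Ioi (0 : ℝ)) fun σ => σ⁻¹ := by simpa using convexOn_zpow (𝕜 := ℝ) (-1)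
  have hinv_anti : AntitoneOn (fun σ : ℝ => σ⁻¹) (Ioi 0) := fun _ hσ _ _ h => inv_anti₀ hσ h
  have hsucc {σ : ℝ} (hσ : σ ∈ Ioi 0) : σ + 1 ∈ Ioi 0 := add_pos hσ one_pos
  have hsucc_nonneg {σ : ℝ} (hσ : σ ∈ Ioi 0) : 0 ≤ (σ + 1)⁻¹ := inv_nonneg.mpr (hsucc hσ).le
  have hsucc_convex : ConvexOn ℝ (Ioi (0 : ℝ)) fun σ => (σ + 1)⁻¹ :=
    (hinv.translate_left 1).subset (fun σ hσ => show 0 < 1 + σ from add_pos one_pos hσ)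
      (convex_Ioi 0)
  have hsucc_anti : AntitoneOn (fun σ : ℝ => (σ + 1)⁻¹) (Ioi 0) :=
    fun _ hσ _ hτ h => hinv_anti (hsucc hσ) (hsucc hτ) (add_le_add_left h 1)
  have hsq_anti : AntitoneOn (fun σ : ℝ => (σ + 1)⁻¹ ^ 2) (Ioi 0) :=
    fun _ hσ _ hτ h => pow_le_pow_left₀ (hsucc_nonneg hτ) (hsucc_anti hσ hτ h) 2
  exact hinv.mul (hsucc_convex.add (hsucc_convex.pow (fun _ hσ => hsucc_nonneg hσ) 2))
    (fun _ hσ => (inv_pos.mpr hσ).le)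
    (fun _ hσ => add_nonneg (hsucc_nonneg hσ) (pow_nonneg (hsucc_nonneg hσ) 2))
    (hinv_anti.monovaryOn (hsucc_anti.add hsq_anti))

lemma gramDrop_nonneg {σ : ℝ} (hσ : 0 ≤ σ) : 0 ≤ gramDrop σ := by
  unfold gramDrop
  positivity

lemma bergmanGram_step_add_step {s t : ℝ} (hst : 0 ≤ s + t) :
    (bergmanGram (s + 1) t - bergmanGram (s + 1) (t + 1)) +
        (bergmanGram (t + 1) s - bergmanGram (t + 1) (s + 1)) =
      (gramDrop (s + t + 2) - (s - t) ^ 2 * (1 / (s + t + 2) ^ 2 - 1 / (s + t + 3) ^ 2)) / 2 := by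
  have hσ : s + t + 2 ≠ 0 := by positivity
  have hσ_succ : s + t + 3 ≠ 0 := by positivity
  simp only [bergmanGram, gramDrop, show s + t + 2 + 1 = s + t + 3 by ring,
    show s + 1 + t + 1 = s + t + 2 by ring, show s + 1 + (t + 1) + 1 = s + t + 3 by ring,
    show t + 1 + s + 1 = s + t + 2 by ring, show t + 1 + (s + 1) + 1 = s + t + 3 by ring]
  field_simp
  ring

lemma bergmanGram_le_div {s t : ℝ} (hs : 0 ≤ s) (ht : 0 ≤ t) :
    bergmanGram s t ≤ (t + 1) / (s + 1) := by
  have hle : (s + 1) ^ 2 ≤ (s + t + 1) ^ 2 := by gcongr; linarith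
  calc bergmanGram s t ≤ (s + 1) * (t + 1) / (s + 1) ^ 2 := by unfold bergmanGram; gcongr
    _ = (t + 1) / (s + 1) := by field_simp

lemma tendsto_bergmanGram {t : ℝ} (ht : 0 ≤ t) :
    Tendsto (fun s => bergmanGram s t) atTop (𝓝 0) := by
  refine tendsto_of_tendsto_of_tendsto_of_le_of_le' tendsto_const_nhds
    ((tendsto_atTop_add_const_right atTop 1 tendsto_id).const_div_atTop (t + 1)) ?_ ?_
  all_goals filter_upwards [eventually_ge_atTop 0] with s hs
  · unfold bergmanGram
    positivity
  · exact bergmanGram_le_div hs ht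

lemma hasSum_bergmanGram (j k : ℕ) : HasSum
    (fun n : ℕ => (√(n + 1) / (j + 1) * (j / (j + 1)) ^ n) *
      (√(n + 1) / (k + 1) * (k / (k + 1)) ^ n)) (bergmanGram j k) := by
  have hr (i : ℕ) : (i / (i + 1) : ℝ) ∈ Ico 0 1 :=
    ⟨by positivity, (div_lt_one (by positivity)).mpr (lt_add_one _)⟩
  have hlt : ‖(j / (j + 1) * (k / (k + 1)) : ℝ)‖ < 1 := by
    rw [Real.norm_of_nonneg (by positivity)]
    exact mul_lt_one_of_nonneg_of_lt_one_left (hr j).1 (hr j).2 (hr k).2.le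
  convert! (hasSum_choose_mul_geometric_of_norm_lt_one 1 hlt).mul_left
    ((j + 1 : ℝ)⁻¹ * (k + 1 : ℝ)⁻¹) using 1
  · ext n
    have hsqrt : √(n + 1 : ℝ) ^ 2 = n + 1 := Real.sq_sqrt (by positivity)
    rw [Nat.choose_one_right, mul_pow]
    push_cast
    linear_combination (j + 1 : ℝ)⁻¹ * (k + 1 : ℝ)⁻¹ *
      ((j / (j + 1) : ℝ) ^ n * (k / (k + 1) : ℝ) ^ n) * hsqrt
  · rw [bergmanGram]
    have hone_sub : (1 - j / (j + 1) * (k / (k + 1)) : ℝ) = (j + k + 1) / ((j + 1) * (k + 1)) := by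
      field_simp
      ring
    rw [hone_sub, one_add_one_eq_two]
    field_simp

end BergmanGram

section HasBergmanGram

variable {E : Type*} [NormedAddCommGroup E] [InnerProductSpace ℝ E]

lemma exists_forall_inner_eq_of_hasSum [CompleteSpace E] {ι κ : Type*} {e : ι → E}
    (he : Orthonormal ℝ e) {a : κ → ι → ℝ} {g : κ → κ → ℝ}
    (ha : ∀ j k, HasSum (fun i => a j i * a k i) (g j k)) :
    ∃ x : κ → E, ∀ j k, ⟪x j, x k⟫ = g j k := by
  have hmem (k : κ) : Memℓp (a k) 2 := memℓp_gen <| by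
    simpa [← sq] using (ha k k).summable
  let f (k : κ) : lp (fun _ : ι => ℝ) 2 := ⟨a k, hmem k⟩
  refine ⟨fun k => he.orthogonalFamily.linearIsometry (f k), fun j k => ?_⟩
  rw [LinearIsometry.inner_map_map]
  refine (lp.hasSum_inner (f j) (f k)).unique ?_
  simpa [f, mul_comm] using ha j k

/-- The sequence `x` has Gram matrix `bergmanGram`. -/
def HasBergmanGram (x : ℕ → E) : Prop :=
  ∀ j k : ℕ, ⟪x j, x k⟫ = bergmanGram j k

lemma exists_hasBergmanGram [CompleteSpace E] {e : ℕ → E} (he : Orthonormal ℝ e) :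
    ∃ x : ℕ → E, HasBergmanGram x :=
  exists_forall_inner_eq_of_hasSum he hasSum_bergmanGram

namespace HasBergmanGram

variable {x : ℕ → E}

lemma norm_eq (hx : HasBergmanGram x) (k : ℕ) : ‖x k‖ = (k + 1) / (2 * k + 1) := by
  rw [← sq_eq_sq₀ (norm_nonneg _) (by positivity), ← real_inner_self_eq_norm_sq, hx, bergmanGram,
    ← two_mul, div_pow, sq (k + 1 : ℝ)]

lemma norm_le_one (hx : HasBergmanGram x) (k : ℕ) : ‖x k‖ ≤ 1 := by
  rw [hx.norm_eq, div_le_one (by positivity)]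
  linarith [k.cast_nonneg (α := ℝ)]

lemma half_le_norm (hx : HasBergmanGram x) (k : ℕ) : 1 / 2 ≤ ‖x k‖ := by
  rw [hx.norm_eq, div_le_div_iff₀ two_pos (by positivity)]
  linarith

lemma not_tendsto_zero (hx : HasBergmanGram x) : ¬ Tendsto x atTop (𝓝 0) := fun h =>
  (half_pos one_pos).not_ge (ge_of_tendsto' (tendsto_zero_iff_norm_tendsto_zero.mp h)
    hx.half_le_norm)

lemma tendsto_inner [CompleteSpace E] (hx : HasBergmanGram x) (v : E) :
    Tendsto (fun k => ⟪x k, v⟫) atTop (𝓝 0) := by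
  refine tendsto_inner_zero hx.norm_le_one (fun j => ?_) v
  simp only [hx _ j]
  exact (tendsto_bergmanGram j.cast_nonneg).comp tendsto_natCast_atTop_atTop

lemma inner_step_add_inner_step (hx : HasBergmanGram x) (i j : ℕ) :
    ⟪x (i + 1), x j - x (j + 1)⟫ + ⟪x (j + 1), x i - x (i + 1)⟫ =
      (gramDrop (i + j + 2) - (i - j) ^ 2 * (1 / (i + j + 2) ^ 2 - 1 / (i + j + 3) ^ 2)) / 2 := by
  simp only [inner_sub_right, hx _ _, Nat.cast_succ]
  exact bergmanGram_step_add_step (by positivity)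

lemma inner_step_self (hx : HasBergmanGram x) (i : ℕ) :
    ⟪x (i + 1), x i - x (i + 1)⟫ = gramDrop (2 * i + 2) / 4 := by
  have h := hx.inner_step_add_inner_step i i
  rw [sub_self, ← two_mul, zero_pow two_ne_zero, zero_mul, ← two_mul] at h
  linarith

lemma inner_sub_step_nonneg (hx : HasBergmanGram x) (i j : ℕ) :
    0 ≤ ⟪x (i + 1) - x (j + 1), (x i - x (i + 1)) - (x j - x (j + 1))⟫ := by
  have hexpand : ⟪x (i + 1) - x (j + 1), (x i - x (i + 1)) - (x j - x (j + 1))⟫ =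
      ⟪x (i + 1), x i - x (i + 1)⟫ + ⟪x (j + 1), x j - x (j + 1)⟫ -
        (⟪x (i + 1), x j - x (j + 1)⟫ + ⟪x (j + 1), x i - x (i + 1)⟫) := by
    rw [inner_sub_left, inner_sub_right (x (i + 1)), inner_sub_right (x (j + 1))]
    ring
  have hconvex : gramDrop (i + j + 2) ≤ (gramDrop (2 * i + 2) + gramDrop (2 * j + 2)) / 2 := by
    have h := convexOn_gramDrop.2 (x := 2 * i + 2) (y := 2 * j + 2) (mem_Ioi.mpr (by positivity))
      (mem_Ioi.mpr (by positivity)) (one_half_pos (α := ℝ)).le one_half_pos.le (add_halves 1)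
    simp only [smul_eq_mul] at h
    rw [show (1 / 2 * (2 * i + 2) + 1 / 2 * (2 * j + 2) : ℝ) = i + j + 2 by ring] at h
    linarith
  have hremainder : 0 ≤ ((i : ℝ) - j) ^ 2 * (1 / (i + j + 2) ^ 2 - 1 / (i + j + 3) ^ 2) :=
    mul_nonneg (sq_nonneg _) (sub_nonneg.mpr (by gcongr; norm_num))
  rw [hexpand, hx.inner_step_add_inner_step, hx.inner_step_self, hx.inner_step_self]
  linarith

lemma isMonotoneGraph_orbitGraph (hx : HasBergmanGram x) : IsMonotoneGraph (orbitGraph x) := by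
  refine isMonotoneGraph_insert_zero_range (fun i => ?_) hx.inner_sub_step_nonneg
  rw [hx.inner_step_self]
  exact div_nonneg (gramDrop_nonneg (by positivity)) (by norm_num)

end HasBergmanGram

end HasBergmanGram

theorem stmt_11_general {E : Type*} [NormedAddCommGroup E] [InnerProductSpace ℝ E]
    [CompleteSpace E] {e : ℕ → E} (he : Orthonormal ℝ e) :
    ∃ (G : Set (E × E)) (F : E → E) (s0 sbar : E),
      Maximal IsMonotoneGraph G ∧ Bornology.IsBounded {y | ∃ u, (y, u) ∈ G} ∧ IsResolvent F G ∧
      (sbar, 0) ∈ G ∧ (∀ v, Tendsto (fun k => ⟪F^[k] s0, v⟫) atTop (𝓝 ⟪sbar, v⟫)) ∧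
      ¬ Tendsto (fun k => F^[k] s0) atTop (𝓝 sbar) := by
  obtain ⟨x, hx⟩ := exists_hasBergmanGram he
  obtain ⟨G, F, hdom, hG, hF, hzero, horbit⟩ :=
    exists_isResolvent_iterate_eq hx.norm_le_one hx.isMonotoneGraph_orbitGraph
  have hball : Bornology.IsBounded (closedBall (0 : E) 1) := isBounded_closedBall
  refine ⟨G, F, x 0, 0, hG, hball.subset ?_, hF, hzero, fun v => ?_, ?_⟩
  · rintro y ⟨u, hyu⟩
    exact hdom ⟨_, hyu, rfl⟩
  · simpa only [horbit, inner_zero_left] using hx.tendsto_inner v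
  · simpa only [horbit] using hx.not_tendsto_zero

/-- Genel–Lindenstrauss repackaged: in `ℓ²(ℕ; ℝ)` there exist a maximally monotone operator
`G` with bounded domain, its resolvent `F`, and a starting point `s0` such that the iterates
`F^[k] s0` converge weakly, but not in norm, to a zero `s̄` of `G`. -/
theorem stmt_11 :
    ∃ (G : Set (lp (fun _ : ℕ => ℝ) 2 × lp (fun _ : ℕ => ℝ) 2))
      (F : lp (fun _ : ℕ => ℝ) 2 → lp (fun _ : ℕ => ℝ) 2)
      (s0 sbar : lp (fun _ : ℕ => ℝ) 2),
      (∀ p ∈ G, ∀ q ∈ G, (0 : ℝ) ≤ ⟪p.1 - q.1, p.2 - q.2⟫) ∧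
      (∀ G' : Set (lp (fun _ : ℕ => ℝ) 2 × lp (fun _ : ℕ => ℝ) 2),
        (∀ p ∈ G', ∀ q ∈ G', (0 : ℝ) ≤ ⟪p.1 - q.1, p.2 - q.2⟫) → G ⊆ G' → G' = G) ∧
      Bornology.IsBounded {x : lp (fun _ : ℕ => ℝ) 2 | ∃ u, (x, u) ∈ G} ∧
      (∀ x y : lp (fun _ : ℕ => ℝ) 2, y = F x ↔ (y, x - y) ∈ G) ∧
      (sbar, (0 : lp (fun _ : ℕ => ℝ) 2)) ∈ G ∧
      (∀ v : lp (fun _ : ℕ => ℝ) 2,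
        Filter.Tendsto (fun k => ⟪F^[k] s0, v⟫) Filter.atTop (nhds ⟪sbar, v⟫)) ∧
      ¬ Filter.Tendsto (fun k => F^[k] s0) Filter.atTop (nhds sbar) := by
  obtain ⟨G, F, s0, sbar, hG, h⟩ :=
    stmt_11_general (HilbertBasis.ofRepr (LinearIsometryEquiv.refl ℝ _)).orthonormal
  exact ⟨G, F, s0, sbar, hG.prop, fun _ hG' hsub => (hG.eq_of_subset hG' hsub).symm, h⟩
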